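/- (No QEI for the free field when the linear coefficient exceeds 1/2.) Let μ > 0, let α > 1/2, and set F_P(θ) = (1−α) + α·cosh θ. Then for every real-valued Schwartz function g on ℝ with g not identically zero, there exists a sequence (φ_j) of smooth compactly supported functions φ_j : ℝ → ℂ with ‖φ_j‖_{L²(ℝ)} = 1 such that Q(φ_j) → −∞ as j → ∞. -/

import Mathlib

/-!
The kernel of the form is `K(θ, η) = cosh²((θ+η)/2) F_P(θ-η) G(ω(θ)-ω(η))`. Since `ω` is even,
reflecting `η` only changes the hyperbolic prefactor, and for `F_P = (1-α) + α cosh` one has the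
exact identity `K(θ, η) - K(θ, -η) = (1-2α) sinh θ sinh η G(ω(θ)-ω(η))` (`kernel_sub_reflect`).
Hence on odd functions `Q` equals `(μ²/(2π)) (1-2α)/2` times the form with kernel
`sinh θ sinh η G(ω(θ)-ω(η))` (`Qform_odd`), and `1-2α < 0`.

As `G` is continuous with `G(0) = ∫ g² > 0`, the real part of `G` is at least `c = G(0)/2 > 0` near
`0`. For an odd real `φ` with `sinh · φ ≥ 0` whose energies `ω` stay in a small enough window,
`Q(φ) ≤ -C c (∫ sinh · φ)²` follows (`Qform_re_le`). The normalized functions proportional to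
`sinh θ · b(cosh θ - n)`, with a fixed narrow bump `b`, satisfy this, and `(∫ sinh · φ)²` is at
least `∫ sinh² θ b(cosh θ - n) dθ ≥ (n-2) ∫ b` by the substitution `u = cosh θ`
(`le_integral_sinh_sq_mul_bump`), which tends to infinity with `n`.
-/

open MeasureTheory

/-- Fourier transform of `g²`: `G(k) = ∫ g(t)² e^{ikt} dt`. -/
noncomputable def fourierG (g : ℝ → ℝ) (k : ℝ) : ℂ :=
  ∫ t : ℝ, ((g t : ℂ))^2 * Complex.exp (Complex.I * (k : ℂ) * (t : ℂ))

/-- One-particle energy density quadratic form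
`Q(φ) = (μ²/(2π)) ∫∫ cosh²((θ+η)/2) F_P(θ−η) G(ω(θ)−ω(η)) conj(φ(θ)) φ(η) dθ dη`. -/
noncomputable def Qform (μ : ℝ) (FP : ℝ → ℝ) (g : ℝ → ℝ) (φ : ℝ → ℂ) : ℂ :=
  ((μ ^ 2 / (2 * Real.pi) : ℝ) : ℂ) *
    ∫ θ : ℝ, ∫ η : ℝ,
      (((Real.cosh ((θ + η) / 2)) ^ 2 * FP (θ - η) : ℝ) : ℂ) *
        fourierG g (μ * Real.cosh θ - μ * Real.cosh η) *
        (starRingEnd ℂ) (φ θ) * φ η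

theorem integrable_sq_schwartz (g : SchwartzMap ℝ ℝ) : Integrable (fun t => (g t) ^ 2) := by
  have h := (g.memLp 2 volume).integrable_sq
  exact h

theorem continuous_fourierG (g : SchwartzMap ℝ ℝ) : Continuous (fourierG g) := by
  unfold fourierG
  refine continuous_of_dominated (bound := fun t => (g t) ^ 2) ?_ ?_ (integrable_sq_schwartz g) ?_
  · intro k
    have := g.continuous
    exact Continuous.aestronglyMeasurable (by fun_prop)
  · intro k
    refine Filter.Eventually.of_forall fun t => ?_
    have : Complex.I * (k : ℂ) * (t : ℂ) = ((k * t : ℝ) : ℂ) * Complex.I := by push_cast; ring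
    rw [norm_mul, this, Complex.norm_exp_ofReal_mul_I]
    simp
  · exact Filter.Eventually.of_forall fun t => by fun_prop

theorem fourierG_zero_re_pos (g : SchwartzMap ℝ ℝ) (hg : ⇑g ≠ 0) : 0 < (fourierG g 0).re := by
  have h : fourierG g 0 = ((∫ t, (g t) ^ 2 : ℝ) : ℂ) := by
    unfold fourierG
    rw [← integral_complex_ofReal]
    simp
  rw [h, Complex.ofReal_re]
  obtain ⟨x, hx⟩ := Function.ne_iff.mp hg
  exact integral_pos_of_integrable_nonneg_nonzero (x := x) (g.continuous.pow 2)
    (integrable_sq_schwartz g) (fun t => sq_nonneg _) (by simpa using hx)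

/-- Writing `cosh² (x/2) = (1 + cosh x)/2`, the products `cosh (θ + η) · cosh (θ - η)` cancel in the
difference of the kernel and its reflection, leaving
`(1/2 - α) · (cosh (θ + η) - cosh (θ - η))`. -/
theorem kernel_sub_reflect (α θ η : ℝ) :
    Real.cosh ((θ + η) / 2) ^ 2 * ((1 - α) + α * Real.cosh (θ - η))
      - Real.cosh ((θ + -η) / 2) ^ 2 * ((1 - α) + α * Real.cosh (θ - -η))
      = (1 - 2 * α) * (Real.sinh θ * Real.sinh η) := by
  have hsq : ∀ x : ℝ, Real.cosh (x / 2) ^ 2 = (1 + Real.cosh x) / 2 := by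
    intro x
    have h1 := Real.cosh_two_mul (x / 2)
    have h2 := Real.cosh_sq (x / 2)
    rw [mul_div_cancel₀ x (two_ne_zero)] at h1
    linarith
  rw [hsq, hsq, sub_neg_eq_add, ← sub_eq_add_neg, Real.cosh_add, Real.cosh_sub]
  ring

theorem integrable_sinh_kernel (μ : ℝ) (g : SchwartzMap ℝ ℝ) (f : ℝ → ℝ) (hf : Continuous f)
    (hc : HasCompactSupport f) :
    Integrable fun p : ℝ × ℝ =>
      (((Real.sinh p.1 * f p.1) * (Real.sinh p.2 * f p.2) : ℝ) : ℂ) *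
        fourierG g (μ * Real.cosh p.1 - μ * Real.cosh p.2) := by
  have hG := continuous_fourierG g
  refine Continuous.integrable_of_hasCompactSupport (by fun_prop) ?_
  refine HasCompactSupport.of_support_subset_isCompact (hc.isCompact.prod hc.isCompact) ?_
  rintro ⟨x, y⟩ h
  constructor <;> refine subset_tsupport _ fun h0 => h ?_ <;> simp only at h0 <;> simp [h0]

/-- On odd functions the form reduces to a multiple of the form with kernel
`sinh θ · sinh η · G(ω(θ) - ω(η))`: averaging the inner integral over `η ↦ -η` replaces the
original kernel by half of its difference with its reflection. -/
theorem Qform_odd (μ α : ℝ) (g : SchwartzMap ℝ ℝ) (f : ℝ → ℝ) (hf : Continuous f)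
    (hc : HasCompactSupport f) (hodd : ∀ x, f (-x) = -f x) :
    Qform μ (fun θ : ℝ => (1 - α) + α * Real.cosh θ) g (fun θ => (f θ : ℂ)) =
      ((μ ^ 2 / (2 * Real.pi) * ((1 - 2 * α) / 2) : ℝ) : ℂ) *
        ∫ p : ℝ × ℝ, (((Real.sinh p.1 * f p.1) * (Real.sinh p.2 * f p.2) : ℝ) : ℂ) *
          fourierG g (μ * Real.cosh p.1 - μ * Real.cosh p.2) := by
  have hG := continuous_fourierG g
  have hcC : HasCompactSupport fun η => (f η : ℂ) := hc.comp_left (g := Complex.ofReal) (by simp)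
  rw [Measure.volume_eq_prod, integral_prod, Complex.ofReal_mul, mul_assoc]
  · unfold Qform
    congr 1
    rw [← integral_const_mul]
    congr 1
    ext θ
    rw [← integral_const_mul]
    set H : ℝ → ℂ := fun η =>
      (((Real.cosh ((θ + η) / 2)) ^ 2 * ((1 - α) + α * Real.cosh (θ - η)) : ℝ) : ℂ) *
        fourierG g (μ * Real.cosh θ - μ * Real.cosh η) *
        (starRingEnd ℂ) (f θ : ℂ) * (f η : ℂ) with hH
    have hHi : Integrable H := by
      refine Continuous.integrable_of_hasCompactSupport (by fun_prop) ?_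
      exact hcC.mul_left
    have hHn : Integrable (fun η => H (-η)) := hHi.comp_neg
    have h1 : ∫ η, H η = ∫ η, (1 / 2 : ℂ) * (H η + H (-η)) := by
      rw [integral_const_mul, integral_add hHi hHn, integral_neg_eq_self H]
      ring
    change ∫ η, H η = _
    rw [h1]
    congr 1
    ext η
    have hk := congrArg (Complex.ofReal) (kernel_sub_reflect α θ η)
    simp only [hH, Real.cosh_neg, hodd, Complex.conj_ofReal, Complex.ofReal_neg]
    rw [Complex.ofReal_sub] at hk
    rw [eq_add_of_sub_eq hk]
    push_cast
    ring
  · exact integrable_sinh_kernel μ g f hf hc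

/-- If `f` is odd, `sinh · f ≥ 0`, and `Re G ≥ c` at all energy differences between points where
`f` does not vanish, then the form is at most `-C · c · (∫ sinh · f)²`, with `C > 0` when
`μ ≠ 0`. -/
theorem Qform_re_le (μ α c : ℝ) (hα : 1 / 2 < α) (g : SchwartzMap ℝ ℝ)
    (f : ℝ → ℝ) (hf : Continuous f)
    (hc : HasCompactSupport f) (hodd : ∀ x, f (-x) = -f x) (hpos : ∀ x, 0 ≤ Real.sinh x * f x)
    (hGc : ∀ x y, f x ≠ 0 → f y ≠ 0 → c ≤ (fourierG g (μ * Real.cosh x - μ * Real.cosh y)).re) :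
    (Qform μ (fun θ : ℝ => (1 - α) + α * Real.cosh θ) g (fun θ => (f θ : ℂ))).re ≤
      -(μ ^ 2 / (2 * Real.pi) * ((2 * α - 1) / 2)) * (c * (∫ x, Real.sinh x * f x) ^ 2) := by
  have hi := integrable_sinh_kernel μ g f hf hc
  have hi1 : Integrable (fun x => Real.sinh x * f x) :=
    Continuous.integrable_of_hasCompactSupport (by fun_prop) hc.mul_left
  rw [Qform_odd μ α g f hf hc hodd, Complex.re_ofReal_mul]
  have hre := integral_re hi
  simp only [RCLike.re_eq_complex_re] at hre
  rw [← hre]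
  have hlow : c * (∫ x, Real.sinh x * f x) ^ 2 ≤ ∫ p : ℝ × ℝ,
      ((((Real.sinh p.1 * f p.1) * (Real.sinh p.2 * f p.2) : ℝ) : ℂ) *
          fourierG g (μ * Real.cosh p.1 - μ * Real.cosh p.2)).re := by
    rw [sq, ← integral_prod_mul, ← integral_const_mul, ← Measure.volume_eq_prod]
    refine integral_mono ((hi1.mul_prod hi1).const_mul c) hi.re ?_
    rintro ⟨x, y⟩
    by_cases hx : f x = 0
    · simp [hx]
    by_cases hy : f y = 0
    · simp [hy]
    have := mul_le_mul_of_nonneg_left (hGc x y hx hy) (mul_nonneg (hpos x) (hpos y))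
    simp only [Complex.re_ofReal_mul]
    linarith
  have hC : 0 ≤ μ ^ 2 / (2 * Real.pi) * ((2 * α - 1) / 2) := by
    have : 0 ≤ 2 * α - 1 := by linarith
    positivity
  nlinarith [mul_le_mul_of_nonneg_left hlow hC]

theorem bump_eq_zero_of_le (b : ContDiffBump (0 : ℝ)) {x : ℝ} (hx : b.rOut ≤ |x|) : b x = 0 :=
  b.zero_of_le_dist (by simpa using hx)

theorem hasCompactSupport_bump_cosh (b : ContDiffBump (0 : ℝ)) (hb : b.rOut ≤ 1) {n : ℝ}
    (hn : 0 ≤ n) : HasCompactSupport fun θ => b (Real.cosh θ - n) := by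
  refine HasCompactSupport.intro (isCompact_Icc (a := -|Real.arcosh (n + 1)|)
    (b := |Real.arcosh (n + 1)|)) fun x hx => bump_eq_zero_of_le b ?_
  have h1 : ¬ |x| ≤ |Real.arcosh (n + 1)| := fun h => hx (abs_le.mp h)
  rw [← Real.cosh_le_cosh, Real.cosh_arcosh (by linarith)] at h1
  exact hb.trans ((by linarith : (1 : ℝ) ≤ Real.cosh x - n).trans (le_abs_self _))

/-- The substitution `u = cosh θ` on `θ ≥ 0`, where `sinh θ ≥ cosh θ - 1`, shows that the weight
`∫ sinh² θ · b (cosh θ - n) dθ` grows at least linearly in `n`. -/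
theorem le_integral_sinh_sq_mul_bump (b : ContDiffBump (0 : ℝ)) (hb : b.rOut ≤ 1) {n : ℝ}
    (hn : 2 ≤ n) :
    (n - 2) * ∫ x, b x ≤ ∫ θ, Real.sinh θ ^ 2 * b (Real.cosh θ - n) := by
  have hbc : Continuous b := b.continuous
  set T := Real.arcosh (n + 1) with hT
  have hcT : Real.cosh T = n + 1 := Real.cosh_arcosh (by linarith)
  have hT0 : 0 ≤ T := Real.arcosh_nonneg (by linarith)
  have hi : Integrable fun θ => Real.sinh θ ^ 2 * b (Real.cosh θ - n) :=
    Continuous.integrable_of_hasCompactSupport (by fun_prop)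
      (hasCompactSupport_bump_cosh b hb (by linarith)).mul_left
  have hsub : ∫ θ in (0 : ℝ)..T, b (Real.cosh θ - n) * Real.sinh θ = ∫ x, b x := by
    have h := intervalIntegral.integral_comp_mul_deriv (a := 0) (b := T) (f := Real.cosh)
      (f' := Real.sinh) (g := fun u => b (u - n)) (fun x _ => Real.hasDerivAt_cosh x)
      Real.continuous_sinh.continuousOn (by fun_prop)
    simp only [Function.comp_def] at h
    rw [h, Real.cosh_zero, hcT, intervalIntegral.integral_comp_sub_right (fun u => b u)]
    refine intervalIntegral.integral_eq_integral_of_support_subset ?_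
    rw [b.support_eq]
    intro x hx
    rw [mem_ball_zero_iff, Real.norm_eq_abs, abs_lt] at hx
    constructor <;> linarith
  rw [← hsub, ← intervalIntegral.integral_const_mul]
  calc _ ≤ ∫ θ in (0 : ℝ)..T, Real.sinh θ ^ 2 * b (Real.cosh θ - n) := by
        refine intervalIntegral.integral_mono_on hT0
          (Continuous.intervalIntegrable (by fun_prop) _ _)
          (Continuous.intervalIntegrable (by fun_prop) _ _) fun θ hθ => ?_
        have hs : 0 ≤ Real.sinh θ := Real.sinh_nonneg_iff.mpr hθ.1
        by_cases h0 : b (Real.cosh θ - n) = 0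
        · simp [h0]
        have h1 : |Real.cosh θ - n| < b.rOut := by
          by_contra h
          exact h0 (bump_eq_zero_of_le b (not_lt.mp h))
        have h2 := (abs_lt.mp h1).1
        have h3 := Real.cosh_sub_sinh θ
        have h4 : Real.exp (-θ) ≤ 1 := Real.exp_le_one_iff.mpr (by linarith [hθ.1])
        have h5 : n - 2 ≤ Real.sinh θ := by linarith
        have := mul_le_mul_of_nonneg_right h5 (mul_nonneg (b.nonneg' (Real.cosh θ - n)) hs)
        nlinarith
    _ ≤ _ := by
        rw [intervalIntegral.integral_of_le hT0]
        exact setIntegral_le_integral hi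
          (Filter.Eventually.of_forall fun θ => mul_nonneg (sq_nonneg _) b.nonneg)

/-- The trial state is the `L²`-normalization of `θ ↦ sinh θ · b (cosh θ - n)`: it is odd and smooth,
and its energies lie within `μ · b.rOut` of `μ · n`. With `I = ∫ sinh² · b` and
`J = ∫ sinh² · b²` (`b` evaluated at `cosh θ - n`), the squared overlap `(∫ sinh · φ)²` is
`I² / J ≥ I`, which grows linearly in `n`. -/
theorem exists_normalized_state (μ α c : ℝ) (hα : 1 / 2 < α) (hc : 0 ≤ c)
    (g : SchwartzMap ℝ ℝ) (b : ContDiffBump (0 : ℝ)) (hb : b.rOut ≤ 1)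
    (hGc : ∀ k, |k| ≤ |μ| * (2 * b.rOut) → c ≤ (fourierG g k).re) (n : ℝ) (hn : 2 ≤ n) :
    ∃ φ : ℝ → ℂ, (ContDiff ℝ (⊤ : ℕ∞) φ ∧ HasCompactSupport φ ∧ (∫ θ : ℝ, ‖φ θ‖ ^ 2) = 1) ∧
      (Qform μ (fun θ : ℝ => (1 - α) + α * Real.cosh θ) g φ).re ≤
        -(μ ^ 2 / (2 * Real.pi) * ((2 * α - 1) / 2)) * (c * ((n - 2) * ∫ x, b x)) := by
  have hbc : Continuous b := b.continuous
  have hcs := hasCompactSupport_bump_cosh b hb (n := n) (by linarith)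
  set s : ℝ → ℝ := fun θ => b (Real.cosh θ - n) with hs
  have hsc : Continuous s := by fun_prop
  have hs0 : ∀ θ, 0 ≤ s θ := fun θ => b.nonneg
  have hs1 : ∀ θ, s θ ≤ 1 := fun θ => b.le_one
  have hiI : Integrable fun θ => Real.sinh θ ^ 2 * s θ :=
    Continuous.integrable_of_hasCompactSupport (by fun_prop) hcs.mul_left
  have hcJ : HasCompactSupport fun θ => (Real.sinh θ * s θ) ^ 2 :=
    hcs.mul_left.comp_left (g := fun x : ℝ => x ^ 2) (by simp)
  have hiJ : Integrable fun θ => (Real.sinh θ * s θ) ^ 2 :=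
    Continuous.integrable_of_hasCompactSupport (by fun_prop) hcJ
  set I := ∫ θ, Real.sinh θ ^ 2 * s θ with hI
  set J := ∫ θ, (Real.sinh θ * s θ) ^ 2 with hJ
  have hIlow : (n - 2) * ∫ x, b x ≤ I := le_integral_sinh_sq_mul_bump b hb hn
  have hJpos : 0 < J := by
    refine Continuous.integral_pos_of_hasCompactSupport_nonneg_nonzero (x := Real.arcosh n)
      (by fun_prop) hcJ (fun θ => sq_nonneg _) ?_
    have h1 : s (Real.arcosh n) = 1 := by
      rw [hs]
      simp only [Real.cosh_arcosh (by linarith : 1 ≤ n), sub_self]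
      exact b.one_of_mem_closedBall (by simp [b.rIn_pos.le])
    have h2 : 0 < Real.sinh (Real.arcosh n) :=
      Real.sinh_pos_iff.mpr (Real.arcosh_pos (by linarith))
    rw [h1]
    positivity
  -- `0 ≤ b ≤ 1` gives `b² ≤ b`.
  have hJI : J ≤ I := by
    refine integral_mono hiJ hiI fun θ => ?_
    have := mul_le_mul_of_nonneg_left (hs1 θ) (mul_nonneg (sq_nonneg (Real.sinh θ)) (hs0 θ))
    simp only
    nlinarith
  set N := (Real.sqrt J)⁻¹ with hN
  have hNpos : 0 < N := inv_pos.mpr (Real.sqrt_pos.mpr hJpos)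
  have hNJ : N ^ 2 * J = 1 := by
    rw [hN, inv_pow, Real.sq_sqrt hJpos.le, inv_mul_cancel₀ hJpos.ne']
  set f : ℝ → ℝ := fun θ => N * (Real.sinh θ * s θ) with hf
  have hfc : Continuous f := by fun_prop
  have hfcs : HasCompactSupport f := hcs.mul_left.mul_left
  have hfs : ContDiff ℝ (⊤ : ℕ∞) f := by
    have h1 : ContDiff ℝ (⊤ : ℕ∞) s :=
      b.contDiff.comp (Real.contDiff_cosh.sub contDiff_const)
    exact contDiff_const.mul (Real.contDiff_sinh.mul h1)
  refine ⟨fun θ => (f θ : ℂ), ⟨Complex.ofRealCLM.contDiff.comp hfs,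
    hfcs.comp_left (g := Complex.ofReal) (by simp), ?_⟩, ?_⟩
  · simp only [Complex.norm_real, Real.norm_eq_abs, sq_abs, hf, mul_pow N]
    rw [integral_const_mul, ← hJ, hNJ]
  · have hne : ∀ x, f x ≠ 0 → |Real.cosh x - n| < b.rOut := by
      intro x hx
      by_contra h
      refine hx ?_
      simp only [hf, hs, bump_eq_zero_of_le b (not_lt.mp h), mul_zero]
    have hmain := Qform_re_le μ α c hα g f hfc hfcs
      (fun x => by simp only [hf, hs, Real.cosh_neg, Real.sinh_neg]; ring)
      (fun x => by
        have : Real.sinh x * f x = N * (Real.sinh x ^ 2 * s x) := by simp only [hf]; ring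
        rw [this]
        exact mul_nonneg hNpos.le (mul_nonneg (sq_nonneg _) (hs0 x)))
      (fun x y hx hy => hGc _ (by
        rw [← mul_sub, abs_mul]
        refine mul_le_mul_of_nonneg_left ?_ (abs_nonneg μ)
        have h1 := abs_lt.mp (hne x hx)
        have h2 := abs_lt.mp (hne y hy)
        rw [abs_le]
        constructor <;> linarith))
    refine hmain.trans ?_
    have hint : ∫ x, Real.sinh x * f x = N * I := by
      rw [hI, ← integral_const_mul]
      congr 1
      ext x
      simp only [hf]
      ring
    have hI0 : 0 ≤ I := hJpos.le.trans hJI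
    have hsq : I ≤ (N * I) ^ 2 := by
      have h1 := mul_le_mul_of_nonneg_left hJI (sq_nonneg N)
      rw [hNJ] at h1
      nlinarith [mul_le_mul_of_nonneg_right h1 hI0]
    have hC : 0 ≤ μ ^ 2 / (2 * Real.pi) * ((2 * α - 1) / 2) := by
      have : 0 ≤ 2 * α - 1 := by linarith
      positivity
    rw [hint, neg_mul, neg_mul, neg_le_neg_iff]
    exact mul_le_mul_of_nonneg_left (mul_le_mul_of_nonneg_left (hIlow.trans hsq) hc) hC

/-- No QEI for the free field when the linear coefficient exceeds `1/2`:
with `F_P(θ) = (1−α) + α·cosh θ` and `α > 1/2`, for every nonzero real Schwartz `g`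
there are normalized smooth compactly supported states with energy density expectation
tending to `−∞`. -/
theorem free_field_no_QEI_large_alpha
    (μ α : ℝ) (hμ : 0 < μ) (hα : 1 / 2 < α)
    (g : SchwartzMap ℝ ℝ) (hg : ⇑g ≠ 0) :
    ∃ φ : ℕ → ℝ → ℂ,
      (∀ j, ContDiff ℝ (⊤ : ℕ∞) (φ j) ∧ HasCompactSupport (φ j) ∧
        (∫ θ : ℝ, ‖φ j θ‖ ^ 2) = 1) ∧
      Filter.Tendsto
        (fun j => (Qform μ (fun θ : ℝ => (1 - α) + α * Real.cosh θ) (⇑g) (φ j)).re)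
        Filter.atTop Filter.atBot := by
  have hG0 := fourierG_zero_re_pos g hg
  set c := (fourierG g 0).re / 2 with hc
  have hcpos : 0 < c := by positivity
  obtain ⟨δ, hδ, hδG⟩ : ∃ δ > 0, ∀ k : ℝ, |k| < δ → c ≤ (fourierG g k).re := by
    have hcont : Continuous fun k => (fourierG g k).re :=
      Complex.continuous_re.comp (continuous_fourierG g)
    have hev := (hcont.tendsto 0).eventually (lt_mem_nhds (show c < (fourierG g 0).re by linarith))
    obtain ⟨δ, hδ, h⟩ := Metric.eventually_nhds_iff.mp hev
    exact ⟨δ, hδ, fun k hk => (h (by simpa using hk)).le⟩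
  set r := min 1 (δ / (4 * μ)) with hr
  have hrpos : 0 < r := lt_min one_pos (by positivity)
  let b : ContDiffBump (0 : ℝ) := ⟨r / 2, r, by positivity, by linarith⟩
  have hβ : 0 < ∫ x, b x := b.integral_pos
  have hGc : ∀ k, |k| ≤ |μ| * (2 * b.rOut) → c ≤ (fourierG g k).re := by
    intro k hk
    refine hδG k (hk.trans_lt ?_)
    have h1 : r ≤ δ / (4 * μ) := min_le_right _ _
    rw [le_div_iff₀ (by positivity)] at h1
    rw [abs_of_pos hμ]
    change μ * (2 * r) < δ
    linarith
  have hst := fun j : ℕ => exists_normalized_state μ α c hα hcpos.le g b (min_le_left _ _) hGc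
    ((j : ℝ) + 2) (by linarith [Nat.cast_nonneg (α := ℝ) j])
  choose φ hφ hQ using hst
  refine ⟨φ, hφ, ?_⟩
  set K := μ ^ 2 / (2 * Real.pi) * ((2 * α - 1) / 2) * (c * ∫ x, b x) with hK
  have hKpos : 0 < K := by
    have : 0 < 2 * α - 1 := by linarith
    positivity
  have hlin : Filter.Tendsto (fun j : ℕ => -(K * (j : ℝ))) Filter.atTop Filter.atBot :=
    Filter.tendsto_neg_atTop_atBot.comp
      (tendsto_natCast_atTop_atTop.const_mul_atTop hKpos)
  refine Filter.tendsto_atBot_mono (fun j => (hQ j).trans (le_of_eq ?_)) hlin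
  rw [hK]
  ring
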